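/- Let (R,m) be a complete Noetherian local integral domain of Krull dimension d containing a field of characteristic p > 0, and let x_1,…,x_d be a system of parameters of R. Then for every k with 1 ≤ k ≤ d one has the colon-capturing inclusion ((x_1,…,x_{k−1}) : x_k) ⊆ (x_1,…,x_{k−1})^*. -/

import Mathlib

/-!
`R` contains a coefficient field `K`, and `X_i ↦ x_i` makes `R` a module-finite extension of the
power series ring `A = K⟦X_1, …, X_d⟧` (injectivity of `A → R` is forced by `dim R = d`). Since `A` is
a domain, there are a free `A`-submodule `F ⊆ R` and a nonzero `c ∈ A` with `c R ⊆ F`. Given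
`f x_k ∈ (x_1, …, x_{k-1})`, Frobenius gives `f^q x_k^q ∈ (x_1^q, …, x_{k-1}^q) R`. After
multiplication by `c` this becomes a relation in the free module `F`, and since the `X_i^q` form a
regular sequence in `A` (`mem_span_X_pow_of_mul`), `c f^q ∈ (x_1^q, …, x_{k-1}^q) R`
(`smul_mem_of_colon`). The element `c` does not depend on `q`, so `f` is in the tight closure.

The coefficient field (`exists_coefficientField`) comes from formal smoothness of the residue field
over `ZMod p`, and this from the splitting of square-zero extensions of fields of characteristic `p`,
proved by Zorn's lemma in `exists_ringHom_section`.
-/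

/-- The Frobenius power `I^[q]` of an ideal. -/
def bracketPow {R : Type} [CommRing R] (I : Ideal R) (q : ℕ) : Ideal R :=
  Ideal.span ((fun a => a ^ q) '' (I : Set R))

/-- The tight closure of an ideal `I` in characteristic `p`. -/
def tightClosure {R : Type} [CommRing R] (p : ℕ) (I : Ideal R) : Set R :=
  {f | ∃ c : R, c ≠ 0 ∧ ∃ e₀ : ℕ, ∀ e ≥ e₀, c * f ^ p ^ e ∈ bracketPow I (p ^ e)}

/-! ### The coefficient field -/

open Polynomial in
/-- A surjection onto a field `K` of characteristic `p` whose kernel is killed by Frobenius splits.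
A maximal subring `S` that contains all `p`-th powers and meets the kernel trivially is a field.
If some `π ξ` were not in the image of `S`, then `X ^ p - ξ ^ p` would be irreducible over `S`, so
that `S[ξ]` still meets the kernel trivially, against maximality. -/
theorem exists_ringHom_section {B K : Type*} [CommRing B] [Field K] (p : ℕ) [Fact p.Prime]
    [CharP B p] (π : B →+* K) (hπ : Function.Surjective π) (hker : ∀ b, π b = 0 → b ^ p = 0) :
    ∃ s : K →+* B, π.comp s = RingHom.id K := by
  have hp : p.Prime := Fact.out
  have : Nontrivial B := π.domain_nontrivial
  have : CharP K p := by
    refine (CharP.charP_iff_prime_eq_zero hp).2 ?_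
    rw [← map_natCast π, CharP.cast_eq_zero, map_zero]
  obtain ⟨S, hS0, hS⟩ := zorn_le_nonempty₀
    {S : Subring B | (frobenius B p).range ≤ S ∧ ∀ b ∈ S, π b = 0 → b = 0} (by
      intro c hc hchain y hy
      refine ⟨sSup c, ⟨(hc hy).1.trans (le_sSup hy), fun b hb hb0 ↦ ?_⟩, fun z hz ↦ le_sSup hz⟩
      obtain ⟨T, hT, hbT⟩ := (Subring.mem_sSup_of_directedOn ⟨y, hy⟩ hchain.directedOn).1 hb
      exact (hc hT).2 b hbT hb0)
    (frobenius B p).range ⟨le_rfl, by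
      rintro _ ⟨b, rfl⟩ hb
      rw [frobenius_def, map_pow] at hb
      rw [frobenius_def]
      exact hker b (eq_zero_of_pow_eq_zero hb)⟩
  have hpow : ∀ b : B, b ^ p ∈ S := fun b ↦ hS0 ⟨b, rfl⟩
  have hinj : ∀ b ∈ S, π b = 0 → b = 0 := hS.prop.2
  -- An inverse of `s` in `S` is `s ^ (p - 1) * b ^ p` with `b` any lift of `(π s)⁻¹`, because
  -- `(s * b - 1) ^ p = 0`.
  have hfield : IsField S := by
    refine ⟨⟨0, 1, zero_ne_one⟩, mul_comm, fun {s} hs ↦ ?_⟩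
    have hs' : π s ≠ 0 := fun h ↦ hs (Subtype.ext (hinj _ s.2 h))
    obtain ⟨b, hb⟩ := hπ (π s)⁻¹
    refine ⟨s ^ (p - 1) * ⟨b ^ p, hpow b⟩, Subtype.ext ?_⟩
    have h1 : ((s : B) * b - 1) ^ p = 0 := hker _ (by simp [hb, hs'])
    rw [sub_pow_char, one_pow, mul_pow, sub_eq_zero] at h1
    change (s : B) * ((s : B) ^ (p - 1) * b ^ p) = 1
    rw [← mul_assoc, mul_pow_sub_one hp.ne_zero, h1]
  let : Field S := hfield.toField
  let : Algebra S K := (π.comp S.subtype).toAlgebra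
  have hsurj : ∀ y : K, ∃ s : S, π s = y := by
    intro y
    by_contra hy
    push Not at hy
    obtain ⟨ξ, rfl⟩ := hπ y
    let l : S := ⟨ξ ^ p, hpow ξ⟩
    have hirr : Irreducible (X ^ p - C l : S[X]) := by
      refine X_pow_sub_C_irreducible_of_prime hp fun b hb ↦ hy b ?_
      have : π ((b : B) ^ p) = π (ξ ^ p) := congrArg (fun z : S ↦ π (z : B)) hb
      rw [map_pow, map_pow] at this
      exact frobenius_inj K p this
    have hmin : X ^ p - C l = minpoly S (π ξ) := by
      refine minpoly.eq_of_irreducible_of_monic hirr ?_ (monic_X_pow_sub_C l hp.ne_zero)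
      rw [map_sub, map_pow, aeval_X, aeval_C, ← map_pow]
      exact sub_self _
    let T : Subring B := (eval₂RingHom S.subtype ξ).range
    have hcomp : ∀ g : S[X], π (eval₂ S.subtype ξ g) = aeval (π ξ) g := fun g ↦ by
      rw [hom_eval₂]; rfl
    have hST : S ≤ T := fun s hs ↦ ⟨C ⟨s, hs⟩, by simp⟩
    have hT : T ≤ S := by
      refine hS.le_of_ge ⟨hS0.trans hST, ?_⟩ hST
      rintro _ ⟨g, rfl⟩ hg
      rw [coe_eval₂RingHom, hcomp] at hg
      obtain ⟨h, rfl⟩ := hmin ▸ minpoly.dvd S _ hg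
      simp [eval₂_mul, l]
    exact hy ⟨ξ, hT ⟨X, by simp⟩⟩ rfl
  let e : S ≃+* K := RingEquiv.ofBijective (π.comp S.subtype) ⟨by
    rw [injective_iff_map_eq_zero]
    exact fun s hs ↦ Subtype.ext (hinj _ s.2 hs), hsurj⟩
  refine ⟨S.subtype.comp e.symm.toRingHom, RingHom.ext fun y ↦ ?_⟩
  exact e.apply_symm_apply y

/-- Every field of characteristic `p` is formally smooth over its prime field, with no finiteness
assumption on the extension. -/
theorem formallySmooth_zmod (p : ℕ) [Fact p.Prime] (K : Type) [Field K] [Algebra (ZMod p) K] :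
    Algebra.FormallySmooth (ZMod p) K := by
  let f : MvPolynomial K (ZMod p) →ₐ[ZMod p] K := MvPolynomial.aeval id
  let B := MvPolynomial K (ZMod p) ⧸ RingHom.ker f.toRingHom ^ 2
  let π : B →ₐ[ZMod p] K := f.kerSquareLift
  have hf : Function.Surjective f := fun a ↦ ⟨MvPolynomial.X a, by simp [f]⟩
  have hπ : Function.Surjective π := fun a ↦ by
    obtain ⟨b, rfl⟩ := hf a
    exact ⟨Ideal.Quotient.mk _ b, rfl⟩
  have : Nontrivial B := π.toRingHom.domain_nontrivial
  have : CharP B p := charP_of_injective_algebraMap (algebraMap (ZMod p) B).injective p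
  obtain ⟨s, hs⟩ := exists_ringHom_section p π.toRingHom hπ (by
    intro b hb
    obtain ⟨b, rfl⟩ := Ideal.Quotient.mk_surjective b
    have hb' : b ∈ RingHom.ker f.toRingHom := hb
    rw [← map_pow, Ideal.Quotient.eq_zero_iff_mem]
    exact Ideal.pow_le_pow_right (Fact.out : p.Prime).two_le (Ideal.pow_mem_pow hb' p))
  refine Algebra.FormallySmooth.of_split f ⟨s, fun r ↦ ?_⟩ (AlgHom.ext fun x ↦ RingHom.congr_fun hs x)
  exact RingHom.congr_fun
    (Subsingleton.elim (s.comp (algebraMap (ZMod p) K)) (algebraMap (ZMod p) B)) r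

/-- Cohen's theorem in equal characteristic `p`: a complete local ring has a coefficient field. -/
theorem exists_coefficientField (R : Type) [CommRing R] [IsLocalRing R]
    [IsAdicComplete (IsLocalRing.maximalIdeal R) R] (p : ℕ) [Fact p.Prime] [CharP R p] :
    ∃ σ : IsLocalRing.ResidueField R →+* R,
      (IsLocalRing.residue R).comp σ = RingHom.id _ := by
  let : Algebra (ZMod p) R := ZMod.algebra R p
  have := formallySmooth_zmod p (IsLocalRing.ResidueField R)
  obtain ⟨g, hg⟩ := Algebra.FormallySmooth.exists_mkₐ_comp_eq_of_isAdicComplete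
    (R := ZMod p) (A := IsLocalRing.ResidueField R) (I := IsLocalRing.maximalIdeal R)
    (AlgHom.id (ZMod p) (IsLocalRing.ResidueField R))
  exact ⟨g.toRingHom, RingHom.ext fun x ↦ AlgHom.congr_fun hg x⟩

open IsLocalRing

/-! ### Module-finiteness over a power series ring -/

/-- A choice of `d` elements of the maximal ideal extends a map `K → R` to `K⟦X_1, …, X_d⟧ → R`. -/
theorem exists_powerSeries_hom {R : Type} [CommRing R] [IsLocalRing R]
    [IsAdicComplete (maximalIdeal R) R] {K : Type} [Field K] (σ : K →+* R) {d : ℕ}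
    (x : Fin d → R) (hx : ∀ i, x i ∈ maximalIdeal R) :
    ∃ φ : MvPowerSeries (Fin d) K →+* R,
      (∀ i, φ (MvPowerSeries.X i) = x i) ∧ ∀ a, φ (MvPowerSeries.C a) = σ a := by
  let : WithIdeal R := ⟨maximalIdeal R⟩
  let : UniformSpace K := ⊥
  have : DiscreteUniformity K := ⟨rfl⟩
  obtain ⟨_, _⟩ := (IsAdic.isAdicComplete_iff (R := R) (I := maximalIdeal R) rfl).1 inferInstance
  have hσ : Continuous σ := continuous_of_discreteTopology
  have ha : MvPowerSeries.HasEval x :=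
    ⟨fun i ↦ WithIdeal.isTopologicallyNilpotent_of_mem (hx i), by simp⟩
  refine ⟨MvPowerSeries.eval₂Hom hσ ha, fun i ↦ ?_, fun a ↦ ?_⟩
  · rw [MvPowerSeries.coe_eval₂Hom, MvPowerSeries.eval₂_X]
  · rw [MvPowerSeries.coe_eval₂Hom, MvPowerSeries.eval₂_C]

theorem isPrecomplete_pi {A ι : Type*} [CommRing A] [Finite ι] (I : Ideal A)
    [IsPrecomplete I A] : IsPrecomplete I (ι → A) := by
  classical
  have := Fintype.ofFinite ι
  refine ⟨fun f hf ↦ ?_⟩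
  have hcomp : ∀ i, ∃ L : A, ∀ n, f n i ≡ L [SMOD (I ^ n • ⊤ : Submodule A A)] := fun i ↦ by
    refine IsPrecomplete.prec inferInstance fun {m n} hmn ↦ ?_
    refine ((hf hmn).map (LinearMap.proj i : (ι → A) →ₗ[A] A)).mono ?_
    rw [Submodule.map_smul'']
    exact Submodule.smul_mono le_rfl le_top
  choose L hL using hcomp
  refine ⟨L, fun n ↦ ?_⟩
  rw [SModEq.sub_mem, pi_eq_sum_univ (f n - L)]
  refine Submodule.sum_mem _ fun i _ ↦ Submodule.smul_mem_smul ?_ trivial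
  simpa [SModEq.sub_mem] using hL i n

/-- If the `x i` generate an ideal primary to the maximal ideal and `K⟦X_1, …, X_d⟧` surjects onto the
residue field of `R`, then `R` is a finite `K⟦X_1, …, X_d⟧`-module: `R / (x)` has finite length, and
generators lift because the power series ring is `(X)`-adically complete and `R` is
`(x)`-adically separated. -/
theorem finite_of_map_X {R : Type} [CommRing R] [IsLocalRing R] [IsNoetherianRing R]
    {K : Type} [Field K] {d : ℕ} [Algebra (MvPowerSeries (Fin d) K) R]
    (hres : Function.Surjective (residue R ∘ algebraMap (MvPowerSeries (Fin d) K) R))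
    (x : Fin d → R) (hx : (Ideal.span (Set.range x)).radical = maximalIdeal R)
    (hX : ∀ i, algebraMap (MvPowerSeries (Fin d) K) R (MvPowerSeries.X i) = x i) :
    Module.Finite (MvPowerSeries (Fin d) K) R := by
  set A := MvPowerSeries (Fin d) K
  let I : Ideal A := Ideal.span (Set.range MvPowerSeries.X)
  have hI : I.map (algebraMap A R) = Ideal.span (Set.range x) := by
    rw [Ideal.map_span, ← Set.range_comp]
    exact congrArg _ (congrArg _ (funext hX))
  have hxm : Ideal.span (Set.range x) ≤ maximalIdeal R := hx ▸ Ideal.le_radical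
  obtain ⟨n, hn⟩ := Ideal.exists_pow_le_of_le_radical_of_fg (I := maximalIdeal R) hx.ge
    (IsNoetherian.noetherian _)
  -- Each layer `m ^ n / m ^ (n + 1)` is generated over `A` by ideal generators of `m ^ n`.
  have key : ∀ n : ℕ, ∃ N : Submodule A R, N.FG ∧
      ⊤ ≤ N ⊔ (maximalIdeal R ^ n).restrictScalars A := by
    intro n
    induction n with
    | zero => exact ⟨⊥, Submodule.fg_bot, by simp⟩
    | succ n ih =>
      obtain ⟨N, hN, hNtop⟩ := ih
      obtain ⟨T, hT⟩ := IsNoetherian.noetherian (maximalIdeal R ^ n)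
      refine ⟨N ⊔ Submodule.span A T, hN.sup (Submodule.fg_span T.finite_toSet),
        hNtop.trans ?_⟩
      rw [sup_assoc]
      refine sup_le_sup_left (fun r hr ↦ ?_) N
      have hr' : r ∈ Submodule.span R (T : Set R) := by rw [hT]; exact hr
      induction hr' using Submodule.span_induction with
      | zero => exact zero_mem _
      | add a b ha hb iha ihb => exact add_mem (iha (hT ▸ ha)) (ihb (hT ▸ hb))
      | mem t ht => exact Submodule.mem_sup_left (Submodule.subset_span ht)
      | smul c t ht iht =>
        have htm : t ∈ maximalIdeal R ^ n := hT ▸ ht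
        obtain ⟨a, ha⟩ := hres (residue R c)
        have hc : c - algebraMap A R a ∈ maximalIdeal R := by
          rw [← residue_eq_zero_iff, map_sub, sub_eq_zero]
          exact ha.symm
        have h1 : c • t = a • t + (c - algebraMap A R a) * t := by
          rw [smul_eq_mul, Algebra.smul_def a t]; ring
        rw [h1]
        refine add_mem (Submodule.smul_mem _ a (iht htm)) (Submodule.mem_sup_right ?_)
        change _ ∈ maximalIdeal R ^ (n + 1)
        rw [pow_succ']
        exact Ideal.mul_mem_mul hc htm
  obtain ⟨N, hN, hNtop⟩ := key n
  obtain ⟨s, f, hf⟩ := (Submodule.fg_iff_exists_fin_linearMap A R).1 hN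
  have : IsPrecomplete I A :=
    (inferInstance : IsAdicComplete (Ideal.span (Set.range MvPowerSeries.X) :
      Ideal (MvPowerSeries (Fin d) K)) (MvPowerSeries (Fin d) K)).toIsPrecomplete
  have : IsPrecomplete I (Fin s → A) := isPrecomplete_pi I
  have : IsHausdorff (I.map (algebraMap A R)) R := by
    rw [hI]
    exact IsHausdorff.of_isLocalRing _ _ fun h ↦ (maximalIdeal.isMaximal R).ne_top
      (top_le_iff.1 (h ▸ hxm))
  have : IsHausdorff I R := IsHausdorff.map_algebraMap_iff.mp this
  refine Module.Finite.of_surjective f (surjective_of_mkQ_comp_surjective (I := I) fun y ↦ ?_)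
  obtain ⟨y, rfl⟩ := Submodule.mkQ_surjective _ y
  obtain ⟨a, ha, b, hb, rfl⟩ := Submodule.mem_sup.1 (hNtop (Submodule.mem_top (x := y)))
  obtain ⟨v, rfl⟩ := hf ▸ ha
  refine ⟨v, ?_⟩
  have hb' : b ∈ (I • ⊤ : Submodule A R) := by
    rw [Ideal.smul_top_eq_map, hI]
    exact hn hb
  rw [LinearMap.comp_apply, map_add,
    (Submodule.mkQ_apply _ b).trans ((Submodule.Quotient.mk_eq_zero _).2 hb'), add_zero]

theorem ringKrullDim_le_of_isIntegral_algebra {A R : Type*} [CommRing A] [CommRing R] [Algebra A R]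
    [Algebra.IsIntegral A R] : ringKrullDim R ≤ ringKrullDim A := by
  refine Order.krullDim_le_of_strictMono (PrimeSpectrum.comap (algebraMap A R)) fun P Q h ↦ ?_
  exact Ideal.IsIntegral.comap_lt_comap (I := P.asIdeal) (J := Q.asIdeal) h

/-! ### Monomial ideals in power series rings -/

section MonomialIdeals

open MvPowerSeries

/-- Every monomial of an element of `(X_i ^ q : i ∈ s)` is divisible by some `X_i ^ q`, `i ∈ s`. -/
theorem coeff_eq_zero_of_mem_span {σ K : Type*} [CommRing K] {s : Set σ} {q : ℕ}
    {h : MvPowerSeries σ K} (hh : h ∈ Ideal.span ((fun i ↦ X i ^ q) '' s)) :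
    ∀ n : σ →₀ ℕ, (∀ i ∈ s, n i < q) → coeff n h = 0 := by
  classical
  induction hh using Submodule.span_induction with
  | zero => simp
  | add a b _ _ ha hb => intro n hn; rw [map_add, ha n hn, hb n hn, add_zero]
  | mem x hx =>
    obtain ⟨i, hi, rfl⟩ := hx
    exact fun n hn ↦ X_pow_dvd_iff.1 dvd_rfl n (hn i hi)
  | smul a b _ hb =>
    intro n hn
    rw [smul_eq_mul, coeff_mul]
    refine Finset.sum_eq_zero fun uv huv ↦ ?_
    rw [hb uv.2 fun i hi ↦ (Nat.le_add_left _ _).trans_lt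
      ((DFunLike.congr_fun (Finset.HasAntidiagonal.mem_antidiagonal.1 huv) i).trans_lt (hn i hi)),
      mul_zero]

/-- Converse of `coeff_eq_zero_of_mem_span` for a finite set of variables. -/
theorem mem_span_of_coeff {σ K : Type*} [CommRing K] (s : Finset σ) (q : ℕ)
    (h : MvPowerSeries σ K) (hh : ∀ n : σ →₀ ℕ, (∀ i ∈ s, n i < q) → coeff n h = 0) :
    h ∈ Ideal.span ((fun i ↦ X i ^ q) '' (s : Set σ)) := by
  classical
  induction s using Finset.induction_on generalizing h with
  | empty =>
    have : h = 0 := MvPowerSeries.ext fun n ↦ hh n (by simp)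
    rw [this]; exact zero_mem _
  | insert j s hj ih =>
    -- `h₁` collects the monomials of `h` divisible by `X j ^ q`.
    let h₁ : MvPowerSeries σ K := fun n ↦ if q ≤ n j then coeff n h else 0
    have hc : ∀ n, coeff n h₁ = if q ≤ n j then coeff n h else 0 := fun n ↦ rfl
    have hd : X j ^ q ∣ h₁ := X_pow_dvd_iff.2 fun n hn ↦ by rw [hc, if_neg (by omega)]
    have h2 : h - h₁ ∈ Ideal.span ((fun i ↦ X i ^ q) '' (s : Set σ)) := by
      refine ih _ fun n hn ↦ ?_
      rw [map_sub, hc]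
      split_ifs with hq
      · exact sub_self _
      · rw [sub_zero]
        refine hh n fun i hi ↦ ?_
        rcases Finset.mem_insert.1 hi with rfl | hi
        · omega
        · exact hn i hi
    rw [← sub_add_cancel h h₁]
    refine add_mem (Ideal.span_mono (Set.image_mono (by simp)) h2)
      (Ideal.mem_of_dvd _ hd (Ideal.subset_span ⟨j, by simp, rfl⟩))

/-- Powers of distinct variables form a regular sequence in a power series ring. -/
theorem mem_span_X_pow_of_mul {σ K : Type*} [Finite σ] [CommRing K] {s : Set σ} {k : σ}
    (hk : k ∉ s) (q : ℕ) {h : MvPowerSeries σ K}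
    (hh : h * X k ^ q ∈ Ideal.span ((fun i ↦ X i ^ q) '' s)) :
    h ∈ Ideal.span ((fun i ↦ X i ^ q) '' s) := by
  classical
  have hs : ((Set.toFinite s).toFinset : Set σ) = s := by simp
  rw [← hs]
  refine mem_span_of_coeff _ q h fun n hn ↦ ?_
  have := coeff_eq_zero_of_mem_span hh (n + Finsupp.single k q) fun i hi ↦ by
    have hne : k ≠ i := fun e ↦ hk (e ▸ hi)
    simpa [Finsupp.single_eq_of_ne' hne] using hn i (by simpa using hi)
  rwa [X_pow_eq, coeff_add_mul_monomial, mul_one] at this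

theorem maximalIdeal_mvPowerSeries (σ K : Type*) [Finite σ] [Field K] :
    maximalIdeal (MvPowerSeries σ K) = Ideal.span (Set.range X) := by
  have := Fintype.ofFinite σ
  refine le_antisymm (fun a ha ↦ ?_) (Ideal.span_le.2 ?_)
  · have h0 : constantCoeff a = 0 := by
      by_contra h
      exact ha (isUnit_iff_constantCoeff.2 (isUnit_iff_ne_zero.2 h))
    simpa using mem_span_of_coeff Finset.univ 1 a fun n hn ↦ by
      have : n = 0 := Finsupp.ext fun i ↦ by simpa using hn i (Finset.mem_univ i)
      rw [this]; exact h0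
  · rintro _ ⟨i, rfl⟩
    exact fun h ↦ by simpa using isUnit_iff_constantCoeff.1 h

end MonomialIdeals

theorem ringKrullDim_mvPowerSeries_le (K : Type*) [Field K] (d : ℕ) :
    ringKrullDim (MvPowerSeries (Fin d) K) ≤ d := by
  refine (ringKrullDim_le_spanFinrank_maximalIdeal (R := MvPowerSeries (Fin d) K)).trans ?_
  rw [maximalIdeal_mvPowerSeries]
  have := Submodule.spanFinrank_span_le_ncard_of_finite (R := MvPowerSeries (Fin d) K)
    (Set.finite_range (MvPowerSeries.X (σ := Fin d) (R := K)))
  have h2 := Set.ncard_image_le (f := (MvPowerSeries.X (σ := Fin d) (R := K))) (s := Set.univ)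
  rw [Set.image_univ, Set.ncard_univ, Nat.card_fin] at h2
  exact_mod_cast this.trans h2

/-! ### Injectivity and colon capturing -/

/-- A nonzero `g` in the kernel would bound `dim R` by `dim K⟦X_1, …, X_d⟧ / (g) ≤ d - 1`. -/
theorem injective_of_finite {R : Type} [CommRing R] {K : Type} [Field K] {d : ℕ}
    [Algebra (MvPowerSeries (Fin d) K) R] [Module.Finite (MvPowerSeries (Fin d) K) R]
    (hd : ringKrullDim R = d) :
    Function.Injective (algebraMap (MvPowerSeries (Fin d) K) R) := by
  rw [injective_iff_map_eq_zero]
  intro g hg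
  by_contra hg0
  let A := MvPowerSeries (Fin d) K
  let ψ : A ⧸ Ideal.span {g} →+* R := Ideal.Quotient.lift _ (algebraMap A R) (fun a ha ↦ by
    obtain ⟨b, rfl⟩ := Ideal.mem_span_singleton.1 ha
    rw [map_mul, hg, zero_mul])
  let : Algebra (A ⧸ Ideal.span {g}) R := ψ.toAlgebra
  have : Algebra.IsIntegral (A ⧸ Ideal.span {g}) R :=
    ⟨RingHom.IsIntegral.tower_top (Ideal.Quotient.mk _) ψ (algebraMap_isIntegral_iff.2
      (inferInstanceAs (Algebra.IsIntegral (MvPowerSeries (Fin d) K) R)))⟩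
  have h1 := ringKrullDim_le_of_isIntegral_algebra (A := A ⧸ Ideal.span {g}) (R := R)
  have h2 := ringKrullDim_quotient_succ_le_of_nonZeroDivisor (mem_nonZeroDivisors_of_ne_zero hg0)
  have h3 := ringKrullDim_mvPowerSeries_le K d
  rw [hd] at h1
  have h4 : (d : WithBot ℕ∞) + 1 ≤ d := ((add_le_add_left h1 1).trans h2).trans h3
  have : d + 1 ≤ d := by exact_mod_cast h4
  omega

/-- A finite module over a domain is carried into a free submodule by multiplication by some `c ≠ 0`. -/
theorem exists_smul_mem_span {A M : Type*} [CommRing A] [IsDomain A] [AddCommGroup M] [Module A M]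
    [Module.Finite A M] : ∃ (ι : Type) (v : ι → M) (c : A), LinearIndependent A v ∧ c ≠ 0 ∧
      ∀ m : M, c • m ∈ Submodule.span A (Set.range v) := by
  classical
  obtain ⟨n, v, hv⟩ := Module.Finite.exists_fin (R := A) (M := M)
  obtain ⟨s, hs, hmax⟩ := exists_maximal_linearIndepOn A v
  have : ∀ i, ∃ a : A, a ≠ 0 ∧ a • v i ∈ Submodule.span A (v '' s) := fun i ↦ by
    by_cases hi : i ∈ s
    · exact ⟨1, one_ne_zero, by simpa using Submodule.subset_span (Set.mem_image_of_mem v hi)⟩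
    · exact hmax i hi
  choose a ha hav using this
  refine ⟨s, fun i ↦ v i, ∏ i, a i, hs, Finset.prod_ne_zero_iff.2 fun i _ ↦ ha i, fun m ↦ ?_⟩
  rw [Set.range_comp' v, Subtype.range_coe]
  have hm : m ∈ Submodule.span A (Set.range v) := hv ▸ trivial
  induction hm using Submodule.span_induction with
  | zero => simp
  | add x y _ _ hx hy => rw [smul_add]; exact add_mem hx hy
  | smul b x _ hx => rw [smul_comm]; exact Submodule.smul_mem _ b hx
  | mem x hx =>
    obtain ⟨i, rfl⟩ := hx
    rw [← Finset.prod_erase_mul _ _ (Finset.mem_univ i), mul_smul]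
    exact Submodule.smul_mem _ _ (hav i)

/-- If `z` is a nonzerodivisor modulo `(y_i : i ∈ s)` in `A`, and `c` multiplies `R` into a free
`A`-submodule, then `c` multiplies `((y_i : i ∈ s) R : z)` into `(y_i : i ∈ s) R`. -/
theorem smul_mem_of_colon {A R ι κ : Type*} [CommRing A] [CommRing R] [Algebra A R]
    {v : ι → R} (hv : LinearIndependent A v) {c : A}
    (hc : ∀ r : R, c • r ∈ Submodule.span A (Set.range v)) (s : Set κ) (y : κ → A) (z : A)
    (hcolon : ∀ h : A, h * z ∈ Ideal.span (y '' s) → h ∈ Ideal.span (y '' s))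
    {g : R} (hg : g * algebraMap A R z ∈ Ideal.span ((fun i ↦ algebraMap A R (y i)) '' s)) :
    c • g ∈ Ideal.span ((fun i ↦ algebraMap A R (y i)) '' s) := by
  let b := Module.Basis.span hv
  let I : Ideal A := Ideal.span (y '' s)
  have hI : I.map (algebraMap A R) = Ideal.span ((fun i ↦ algebraMap A R (y i)) '' s) := by
    rw [Ideal.map_span, Set.image_image]
  -- For `r` in the extended ideal, the coordinates of `c • r` lie in `I`.
  have hcoord : ∀ r ∈ I.map (algebraMap A R), ∀ j, b.repr ⟨c • r, hc r⟩ j ∈ I := by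
    intro r hr j
    let L : R →ₗ[A] A := (Finsupp.lapply j ∘ₗ b.repr.toLinearMap) ∘ₗ
      (LinearMap.codRestrict (Submodule.span A (Set.range v)) (c • LinearMap.id) hc)
    change L r ∈ I
    have hr' : r ∈ (I • ⊤ : Submodule A R) := by rw [Ideal.smul_top_eq_map]; exact hr
    have h1 : L r ∈ (I • ⊤ : Submodule A R).map L := ⟨r, hr', rfl⟩
    rw [Submodule.map_smul''] at h1
    exact Ideal.mul_le_left (I := I) (J := Submodule.map L ⊤) h1
  rw [← hI] at hg ⊢
  have hmem : ∀ j, b.repr ⟨c • g, hc g⟩ j ∈ I := fun j ↦ by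
    refine hcolon _ ?_
    have h2 := hcoord _ hg j
    have h3 : (⟨c • (g * algebraMap A R z), hc _⟩ : Submodule.span A (Set.range v)) =
        z • ⟨c • g, hc g⟩ := Subtype.ext (by
      change c • (g * algebraMap A R z) = z • c • g
      simp only [Algebra.smul_def]; ring)
    rw [h3, map_smul, Finsupp.smul_apply, smul_eq_mul, mul_comm] at h2
    exact h2
  have h4 := congrArg Subtype.val (b.linearCombination_repr ⟨c • g, hc g⟩)
  rw [← show _ = c • g from h4, Finsupp.linearCombination_apply, Finsupp.sum, Submodule.coe_sum]
  refine sum_mem fun j _ ↦ ?_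
  rw [Submodule.coe_smul, Algebra.smul_def]
  exact Ideal.mul_mem_right _ _ (Ideal.mem_map_of_mem _ (hmem j))

/-- **colon capturing.** Let `(R, m)` be a complete Noetherian local domain
of Krull dimension `d` and characteristic `p > 0`, and let `x_1, …, x_d` be a system of
parameters. Then `((x_1,…,x_{k-1}) : x_k) ⊆ (x_1,…,x_{k-1})^*` for `k = 1, …, d`
(here `k : Fin d` indexes the parameter `x_k`, and the previous ones are the `x_i`, `i < k`). -/
theorem statement9 (R : Type) [CommRing R] [IsLocalRing R] [IsNoetherianRing R] [IsDomain R]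
    [IsAdicComplete (IsLocalRing.maximalIdeal R) R]
    (p : ℕ) [Fact p.Prime] [CharP R p]
    (d : ℕ) (hd : ringKrullDim R = d)
    (x : Fin d → R) (hx : (Ideal.span (Set.range x)).radical = IsLocalRing.maximalIdeal R)
    (k : Fin d) (f : R)
    (hf : f * x k ∈ Ideal.span (x '' {i | i < k})) :
    f ∈ tightClosure p (Ideal.span (x '' {i | i < k})) := by
  have hxm : ∀ i, x i ∈ maximalIdeal R := fun i ↦
    hx ▸ Ideal.le_radical (Ideal.subset_span (Set.mem_range_self i))
  obtain ⟨σ, hσ⟩ := exists_coefficientField R p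
  obtain ⟨φ, hφX, hφC⟩ := exists_powerSeries_hom σ x hxm
  let : Algebra (MvPowerSeries (Fin d) (ResidueField R)) R := φ.toAlgebra
  have hX : ∀ i, algebraMap (MvPowerSeries (Fin d) (ResidueField R)) R (MvPowerSeries.X i) = x i :=
    hφX
  have : Module.Finite (MvPowerSeries (Fin d) (ResidueField R)) R := by
    refine finite_of_map_X (fun a ↦ ⟨MvPowerSeries.C a, ?_⟩) x hx hX
    exact (congrArg (residue R) (hφC a)).trans (RingHom.congr_fun hσ a)
  have hinj := injective_of_finite (R := R) (K := ResidueField R) hd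
  have : IsDomain (MvPowerSeries (Fin d) (ResidueField R)) := NoZeroDivisors.to_isDomain _
  obtain ⟨ι, v, c, hv, hc0, hc⟩ :=
    exists_smul_mem_span (A := MvPowerSeries (Fin d) (ResidueField R)) (M := R)
  refine ⟨algebraMap _ R c, (map_ne_zero_iff _ hinj).2 hc0, 0, fun e _ ↦ ?_⟩
  rw [← Algebra.smul_def]
  have hfrob : f ^ p ^ e * x k ^ p ^ e ∈ Ideal.span ((fun i ↦ x i ^ p ^ e) '' {i | i < k}) := by
    have := Ideal.mem_map_of_mem (iterateFrobenius R p e) hf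
    rwa [Ideal.map_span, Set.image_image, iterateFrobenius_def, mul_pow] at this
  have hle : Ideal.span ((fun i ↦ x i ^ p ^ e) '' {i | i < k}) ≤
      bracketPow (Ideal.span (x '' {i | i < k})) (p ^ e) := by
    refine Ideal.span_mono ?_
    rintro _ ⟨i, hi, rfl⟩
    exact ⟨x i, Ideal.subset_span ⟨i, hi, rfl⟩, rfl⟩
  refine hle ?_
  have := smul_mem_of_colon hv hc {i | i < k} (fun i ↦ MvPowerSeries.X i ^ p ^ e)
    (MvPowerSeries.X k ^ p ^ e)
    (fun h hh ↦ mem_span_X_pow_of_mul (s := {i | i < k}) (k := k) (by simp) (p ^ e) hh)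
    (g := f ^ p ^ e)
  simp only [map_pow, hX] at this
  exact this hfrob
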